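/- Let G be a distance regular finite simple graph. Then for any finite simple graph H, G ≅_{DNN} H if and only if H is a distance regular graph that is cospectral to G (the adjacency matrices of G and H have the same characteristic polynomial). -/

import Mathlib

open Matrix BigOperators

/-- `rel(g,g') = rel(h,h')`. -/
def relEq {α β : Type*} (G : SimpleGraph α) (H : SimpleGraph β)
    (g g' : α) (h h' : β) : Prop :=
  (g = g' ↔ h = h') ∧ (G.Adj g g' ↔ H.Adj h h')

/-- `M` satisfies the linear constraints of an isomorphism matrix for `G` to `H`. -/
def IsIsoMatrix {α β : Type*} [Fintype α] [Fintype β]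
    (G : SimpleGraph α) (H : SimpleGraph β)
    (M : Matrix (α × β) (α × β) ℝ) : Prop :=
  (∀ g g' : α, ∑ h : β, ∑ h' : β, M (g, h) (g', h') = 1) ∧
  (∀ h h' : β, ∑ g : α, ∑ g' : α, M (g, h) (g', h') = 1) ∧
  (∀ g g' h h', ¬ relEq G H g g' h h' → M (g, h) (g', h') = 0)

/-- `G` is distance regular: it is connected, and the number of vertices `w` at
distance `i` from `u` and distance `j` from `v` depends only on `i`, `j` and the
distance between `u` and `v`. -/
def DistanceRegular {V : Type*} [Fintype V] (G : SimpleGraph V) : Prop :=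
  G.Connected ∧ ∃ p : ℕ → ℕ → ℕ → ℕ,
    ∀ (i j : ℕ) (u v : V),
      Set.ncard {w : V | G.dist u w = i ∧ G.dist w v = j} = p i j (G.dist u v)

/-!
Write `A` and `B` for the adjacency matrices of `G` and `H`, and `A_i`, `B_i` for their distance
matrices.

A matrix `M` for `G` to `H` is the Choi matrix of a linear map `Φ` from matrices over the vertices
of `G` to matrices over those of `H`. The linear constraints make `Φ` and its adjoint preserve the
identity, and make `Φ` preserve traces and map `A` to `B`. If `M` is positive semidefinite, then
`tr (M Lᴴ L) = 0` for `L = A ⊗ 1 - 1 ⊗ B` forces `(A ⊗ 1) M = (1 ⊗ B) M`, that is,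
`Φ (r(A) X) = r(B) Φ(X)` for every polynomial `r`, and `tr r(A) = tr r(B)` is cospectrality. If `M`
is also entrywise nonnegative, then `Φ (A ^ n) = B ^ n` transports walks, so `M` is supported on
pairs at equal distance and `Φ` maps `A_i` to `B_i`. When `G` is distance regular, `A_i` is a
polynomial in `A`, whence `B_i B_j = Φ (A_i A_j)`, and `H` has the intersection numbers of `G`.

Conversely, let `G` and `H` be distance regular and cospectral. On the algebra of pairs
`(r(A), r(B))` both components have the same trace, and the recurrence expressing `A_1 A_i` through
`A_0, …, A_{i+1}` shows inductively that it contains all pairs `(A_i, B_i)`: the traces determine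
the coefficients. Hence `G` and `H` have the same intersection numbers and the same numbers `T_i` of
ordered pairs of vertices at distance `i`. The matrix `M = ∑ T_i⁻¹ A_i ⊗ B_i` then satisfies
`(A_i ⊗ 1) M = (1 ⊗ B_i) M`, so `M² = K M` for the positive definite `K = ∑ T_i⁻¹ A_i² ⊗ 1`, and
`M = M K⁻¹ M` is positive semidefinite.
-/

open scoped Polynomial Kronecker MatrixOrder ComplexOrder Finset
open Polynomial (aeval aeval_pi_apply coe_aeval_eq_eval aeval_algHom_apply)

section Spectrum

variable {𝕜 m n : Type*} [RCLike 𝕜] [Fintype m] [Fintype n] [DecidableEq m] [DecidableEq n]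

theorem trace_aeval_eq_sum_roots_charpoly {A : Matrix n n 𝕜} (hA : A.IsHermitian) (q : 𝕜[X]) :
    (aeval A q).trace = (A.charpoly.roots.map q.eval).sum := by
  let U := Unitary.conjStarAlgAut 𝕜 _ hA.eigenvectorUnitary
  let D : n → 𝕜 := RCLike.ofReal ∘ hA.eigenvalues
  have aeval_diagonal : aeval (diagonal D) q = diagonal fun i => q.eval (D i) := by
    simpa [aeval_pi_apply, coe_aeval_eq_eval] using aeval_algHom_apply (diagonalAlgHom 𝕜) D q
  have aeval_conj : aeval A q = U (aeval (diagonal D) q) := by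
    conv_lhs => rw [hA.spectral_theorem]
    exact aeval_algHom_apply U.toAlgEquiv.toAlgHom _ q
  rw [aeval_conj, aeval_diagonal, Unitary.conjStarAlgAut_apply, trace_mul_cycle,
    Unitary.coe_star_mul_self, one_mul, trace_diagonal, hA.roots_charpoly_eq_eigenvalues,
    Multiset.map_map]
  rfl

theorem multiset_eq_of_forall_sum_map_eval_eq {K : Type*} [Field K] [CharZero K] {s t : Multiset K}
    (h : ∀ q : K[X], (s.map q.eval).sum = (t.map q.eval).sum) : s = t := by
  classical
  ext x
  let nodes : Finset K := insert x (s.toFinset ∪ t.toFinset)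
  let q := Lagrange.interpolate nodes id fun y => if x = y then 1 else 0
  have eval_q : ∀ y ∈ nodes, q.eval y = if x = y then 1 else 0 :=
    fun y hy => Lagrange.eval_interpolate_at_node _ (Set.injOn_id _) hy
  have sum_eval_q : ∀ r : Multiset K, (∀ y ∈ r, y ∈ nodes) →
      (r.map q.eval).sum = r.count x := fun r hr => by
    rw [Multiset.map_congr rfl fun y hy => eval_q y (hr y hy), Finset.sum_multiset_map_count]
    simp +contextual
  have hs : ∀ y ∈ s, y ∈ nodes := fun y hy => by simp [nodes, hy]
  have ht : ∀ y ∈ t, y ∈ nodes := fun y hy => by simp [nodes, hy]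
  exact_mod_cast (sum_eval_q s hs).symm.trans ((h q).trans (sum_eval_q t ht))

theorem charpoly_eq_iff_forall_trace_aeval_eq {A : Matrix m m 𝕜} {B : Matrix n n 𝕜}
    (hA : A.IsHermitian) (hB : B.IsHermitian) :
    A.charpoly = B.charpoly ↔ ∀ q : 𝕜[X], (aeval A q).trace = (aeval B q).trace := by
  simp only [trace_aeval_eq_sum_roots_charpoly hA, trace_aeval_eq_sum_roots_charpoly hB]
  refine ⟨fun h q => by rw [h], fun h => ?_⟩
  rw [hA.splits_charpoly.eq_prod_roots_of_monic A.charpoly_monic,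
    hB.splits_charpoly.eq_prod_roots_of_monic B.charpoly_monic,
    multiset_eq_of_forall_sum_map_eval_eq h]

end Spectrum

section PosSemidef

variable {𝕜 m n : Type*} [RCLike 𝕜] [Fintype m] [Fintype n]

theorem mul_eq_zero_of_trace_mul_conjTranspose_mul_self_eq_zero {M : Matrix n n 𝕜}
    (hM : M.PosSemidef) {L : Matrix m n 𝕜} (h : (M * (Lᴴ * L)).trace = 0) : L * M = 0 := by
  classical
  obtain ⟨C, rfl⟩ := CStarAlgebra.nonneg_iff_eq_star_mul_self.mp hM.nonneg
  rw [star_eq_conjTranspose] at h ⊢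
  have : L * Cᴴ = 0 := by
    rw [← trace_conjTranspose_mul_self_eq_zero_iff, ← h]
    rw [conjTranspose_mul, conjTranspose_conjTranspose, Matrix.mul_assoc, ← Matrix.mul_assoc Lᴴ,
      trace_mul_comm, Matrix.mul_assoc, trace_mul_comm]
  rw [← Matrix.mul_assoc, this, Matrix.zero_mul]

theorem posSemidef_of_mul_self_eq_mul {M K : Matrix n n 𝕜} (hM : M.IsHermitian)
    (hK : K.PosDef) (h : M * M = K * M) : M.PosSemidef := by
  classical
  have hdet : IsUnit K.det := K.isUnit_iff_isUnit_det.mp hK.isUnit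
  have comm : M * K = K * M := by
    rw [← h, ← hM.eq, ← hK.isHermitian.eq, ← conjTranspose_mul, ← h, conjTranspose_mul, hM.eq]
  have : M = Mᴴ * K⁻¹ * M := calc
    M = K⁻¹ * (M * M) := by rw [h, nonsing_inv_mul_cancel_left _ _ hdet]
    _ = K⁻¹ * (M * K) * K⁻¹ * M := by
      rw [Matrix.mul_assoc, Matrix.mul_assoc, Matrix.mul_assoc,
        mul_nonsing_inv_cancel_left _ _ hdet]
    _ = Mᴴ * K⁻¹ * M := by rw [comm, nonsing_inv_mul_cancel_left _ _ hdet, hM.eq]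
  rw [this]
  exact hK.inv.posSemidef.conjTranspose_mul_mul_same M

end PosSemidef

section ChoiMap

variable {R m n : Type*} [CommSemiring R] [Fintype m]

/-- The linear map from matrices over `m` to matrices over `n` whose Choi matrix is `M`, that is,
which maps the matrix unit at `(g, g')` to the block `M (g, ·) (g', ·)`. The constraints on an
isomorphism matrix become identities for this map. -/
def choiMap (M : Matrix (m × n) (m × n) R) : Matrix m m R →ₗ[R] Matrix n n R where
  toFun X := of fun h h' => ∑ g, ∑ g', M (g, h) (g', h') * X g g'
  map_add' X Y := by
    ext h h'
    simp [mul_add, Finset.sum_add_distrib]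
  map_smul' c X := by
    ext h h'
    simp [Finset.mul_sum, mul_left_comm]

theorem choiMap_apply (M : Matrix (m × n) (m × n) R) (X : Matrix m m R) (h h' : n) :
    choiMap M X h h' = ∑ g, ∑ g', M (g, h) (g', h') * X g g' := rfl

theorem mul_le_choiMap_apply [PartialOrder R] [IsOrderedRing R] {M : Matrix (m × n) (m × n) R}
    (hM : ∀ x y, 0 ≤ M x y) {X : Matrix m m R} (hX : ∀ g g', 0 ≤ X g g') (g g' : m) (h h' : n) :
    M (g, h) (g', h') * X g g' ≤ choiMap M X h h' := by
  have nonneg (x x' : m) : 0 ≤ M (x, h) (x', h') * X x x' := mul_nonneg (hM _ _) (hX x x')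
  calc M (g, h) (g', h') * X g g' ≤ ∑ x', M (g, h) (x', h') * X g x' :=
        Finset.single_le_sum (fun x' _ => nonneg g x') (Finset.mem_univ g')
    _ ≤ choiMap M X h h' :=
        Finset.single_le_sum (f := fun x => ∑ x', M (x, h) (x', h') * X x x')
          (fun x _ => Finset.sum_nonneg fun x' _ => nonneg x x') (Finset.mem_univ g)

variable [Fintype n]

theorem kronecker_one_mul_apply [DecidableEq n] (X : Matrix m m R) (M : Matrix (m × n) (m × n) R)
    (g : m) (h : n) (y : m × n) :
    ((X ⊗ₖ (1 : Matrix n n R)) * M) (g, h) y = ∑ x, X g x * M (x, h) y := by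
  simp [mul_apply, Fintype.sum_prod_type, one_apply]

theorem one_kronecker_mul_apply [DecidableEq m] (Z : Matrix n n R) (M : Matrix (m × n) (m × n) R)
    (g : m) (h : n) (y : m × n) :
    (((1 : Matrix m m R) ⊗ₖ Z) * M) (g, h) y = ∑ x, Z h x * M (g, x) y := by
  simp [mul_apply, Fintype.sum_prod_type, one_apply]

theorem choiMap_kronecker_one_mul [DecidableEq n] (M : Matrix (m × n) (m × n) R)
    (X Y : Matrix m m R) : choiMap ((X ⊗ₖ 1) * M) Y = choiMap M (Xᵀ * Y) := by
  ext h h'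
  simp only [choiMap_apply, kronecker_one_mul_apply]
  simp only [mul_apply, transpose_apply, Finset.sum_mul, Finset.mul_sum]
  rw [Finset.sum_comm_cycle]
  refine Finset.sum_congr rfl fun x _ => Finset.sum_comm.trans ?_
  exact Finset.sum_congr rfl fun g' _ => Finset.sum_congr rfl fun g _ => by ring

theorem choiMap_one_kronecker_mul [DecidableEq m] (M : Matrix (m × n) (m × n) R)
    (Z : Matrix n n R) (Y : Matrix m m R) : choiMap ((1 ⊗ₖ Z) * M) Y = Z * choiMap M Y := by
  ext h h'
  simp only [choiMap_apply, one_kronecker_mul_apply]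
  simp only [mul_apply, choiMap_apply, Finset.sum_mul, Finset.mul_sum, mul_assoc]
  exact Finset.sum_comm_cycle

theorem trace_mul_kronecker (M : Matrix (m × n) (m × n) R) (X : Matrix m m R) (Y : Matrix n n R) :
    (M * (X ⊗ₖ Y)).trace = (choiMap M Xᵀ * Y).trace := by
  simp only [trace, diag_apply, mul_apply, choiMap_apply, kronecker_apply, Fintype.sum_prod_type,
    transpose_apply, Finset.sum_mul, mul_assoc]
  rw [Finset.sum_comm]
  exact Finset.sum_congr rfl fun h _ => Finset.sum_comm_cycle

theorem trace_choiMap_mul (M : Matrix (m × n) (m × n) R) (X : Matrix m m R) (Y : Matrix n n R) :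
    (choiMap M X * Y).trace = (choiMap (M.submatrix Prod.swap Prod.swap) Yᵀ * Xᵀ).trace := by
  have swap_kronecker : Y ⊗ₖ Xᵀ = (Xᵀ ⊗ₖ Y).submatrix Prod.swap Prod.swap := by
    ext
    simp [mul_comm]
  rw [← trace_mul_kronecker, swap_kronecker, ← Equiv.coe_prodComm, submatrix_mul_equiv]
  refine Eq.trans ?_ (Equiv.sum_comp (Equiv.prodComm n m) (M * (Xᵀ ⊗ₖ Y)).diag).symm
  rw [← trace, trace_mul_kronecker, transpose_transpose]

end ChoiMap

section DistanceMatrix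

variable {R V : Type*}

/-- The matrix with rows and columns indexed by the vertices of `G` whose entries are the function
`f` of the distance between the two vertices. -/
noncomputable def radialMatrix (G : SimpleGraph V) (f : ℕ → R) : Matrix V V R :=
  of fun u v => f (G.dist u v)

/-- The `i`-th distance matrix of `G`, with an entry `1` for each pair of vertices at distance `i`.
As `SimpleGraph.dist` is `0` between distinct components, this is the usual notion for connected
graphs only. -/
noncomputable def distMatrix (R : Type*) [Zero R] [One R] (G : SimpleGraph V) (i : ℕ) :
    Matrix V V R :=
  radialMatrix G fun k => if k = i then 1 else 0

/-- The number of ordered pairs of vertices of `G` at distance `i`. -/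
noncomputable def distPairCount [Fintype V] (G : SimpleGraph V) (i : ℕ) : ℕ :=
  #{x : V × V | G.dist x.1 x.2 = i}

/-- The numbers `p i j k`, usually written `p_{ij}^k`, are intersection numbers of `G`. They are
determined by `G` only for those `k` that occur as a distance in `G`. -/
def HasIntersectionNumbers (G : SimpleGraph V) (p : ℕ → ℕ → ℕ → ℕ) : Prop :=
  ∀ (i j : ℕ) (u v : V), {w : V | G.dist u w = i ∧ G.dist w v = j}.ncard = p i j (G.dist u v)

@[simp]
theorem radialMatrix_apply (G : SimpleGraph V) (f : ℕ → R) (u v : V) :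
    radialMatrix G f u v = f (G.dist u v) := rfl

theorem radialMatrix_transpose (G : SimpleGraph V) (f : ℕ → R) :
    (radialMatrix G f)ᵀ = radialMatrix G f := by
  ext u v
  simp [G.dist_comm]

section Semiring

variable [Semiring R] {G : SimpleGraph V}

@[simp]
theorem distMatrix_apply (i : ℕ) (u v : V) :
    distMatrix R G i u v = if G.dist u v = i then 1 else 0 := rfl

theorem distMatrix_transpose (i : ℕ) : (distMatrix R G i)ᵀ = distMatrix R G i :=
  radialMatrix_transpose G _

theorem distMatrix_zero [DecidableEq V] (hG : G.Connected) : distMatrix R G 0 = 1 := by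
  ext u v
  simp [one_apply, hG.dist_eq_zero_iff]

theorem distMatrix_one [DecidableRel G.Adj] : distMatrix R G 1 = G.adjMatrix R := by
  ext u v
  simp [SimpleGraph.adjMatrix_apply, SimpleGraph.dist_eq_one_iff_adj]

theorem radialMatrix_eq_sum {f : ℕ → R} {N : ℕ}
    (h : ∀ u v, N ≤ G.dist u v → f (G.dist u v) = 0) :
    radialMatrix G f = ∑ k ∈ Finset.range N, f k • distMatrix R G k := by
  ext u v
  have : f (G.dist u v) = if G.dist u v < N then f (G.dist u v) else 0 := by
    split_ifs with huv
    · rfl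
    · exact h u v (not_lt.mp huv)
  simpa [Matrix.sum_apply] using this

variable [Fintype V] {p : ℕ → ℕ → ℕ → ℕ}

theorem distMatrix_mul_distMatrix_apply (i j : ℕ) (u v : V) :
    (distMatrix R G i * distMatrix R G j) u v =
      ({w : V | G.dist u w = i ∧ G.dist w v = j}.ncard : R) := by
  simp [mul_apply, Set.ncard_eq_toFinset_card', ← ite_and, and_comm]

theorem HasIntersectionNumbers.distMatrix_mul_distMatrix (hp : HasIntersectionNumbers G p)
    (i j : ℕ) : distMatrix R G i * distMatrix R G j = radialMatrix G fun k => (p i j k : R) := by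
  ext u v
  rw [distMatrix_mul_distMatrix_apply, hp, radialMatrix_apply]

theorem hasIntersectionNumbers_of_distMatrix_mul_distMatrix [CharZero R]
    (h : ∀ i j, distMatrix R G i * distMatrix R G j = radialMatrix G fun k => (p i j k : R)) :
    HasIntersectionNumbers G p := fun i j u v => by
  have := congr_fun₂ (h i j) u v
  rw [distMatrix_mul_distMatrix_apply, radialMatrix_apply] at this
  exact_mod_cast this

theorem distPairCount_pos (u v : V) : 0 < distPairCount G (G.dist u v) :=
  Finset.card_pos.mpr ⟨(u, v), by simp⟩

theorem distMatrix_eq_zero_of_distPairCount_eq_zero {i : ℕ} (h : distPairCount G i = 0) :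
    distMatrix R G i = 0 := by
  ext u v
  rw [distMatrix_apply, if_neg, Matrix.zero_apply]
  rintro rfl
  exact (distPairCount_pos u v).ne' h

theorem sum_sum_dist_eq_ite (i : ℕ) (c : R) :
    ∑ u, ∑ v, (if G.dist u v = i then c else 0) = distPairCount G i * c := by
  rw [← Fintype.sum_prod_type' fun u v => if G.dist u v = i then c else 0, ← Finset.sum_filter,
    Finset.sum_const, nsmul_eq_mul, distPairCount]

theorem one_dotProduct_distMatrix_mulVec_one (i : ℕ) :
    1 ⬝ᵥ (distMatrix R G i *ᵥ 1) = distPairCount G i := by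
  simpa [dotProduct, mulVec] using sum_sum_dist_eq_ite (G := G) i (1 : R)

theorem trace_radialMatrix_mul_distMatrix (f : ℕ → R) (k : ℕ) :
    (radialMatrix G f * distMatrix R G k).trace = distPairCount G k * f k := by
  rw [← sum_sum_dist_eq_ite]
  refine Finset.sum_congr rfl fun u _ => ?_
  rw [diag_apply, mul_apply]
  refine Finset.sum_congr rfl fun v _ => ?_
  rw [radialMatrix_apply, distMatrix_apply, G.dist_comm (u := v), mul_ite, mul_one, mul_zero]
  split_ifs with h <;> simp [h]

theorem trace_distMatrix_mul_self (k : ℕ) :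
    (distMatrix R G k * distMatrix R G k).trace = distPairCount G k :=
  (trace_radialMatrix_mul_distMatrix _ k).trans (by simp)

end Semiring

end DistanceMatrix

section Intersection

variable {V : Type*} {G : SimpleGraph V} {p : ℕ → ℕ → ℕ → ℕ}

theorem dist_lt_card [Fintype V] (hG : G.Connected) (u v : V) :
    G.dist u v < Fintype.card V := by
  obtain ⟨w, hw, hlen⟩ := hG.exists_path_of_dist u v
  exact hlen ▸ hw.length_lt

namespace HasIntersectionNumbers

theorem eq_zero_of_add_lt_dist (hp : HasIntersectionNumbers G p) (hG : G.Connected) {i j : ℕ}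
    {u v : V} (h : i + j < G.dist u v) : p i j (G.dist u v) = 0 := by
  have : {w : V | G.dist u w = i ∧ G.dist w v = j} = ∅ := by
    refine Set.eq_empty_of_forall_notMem fun w ⟨huw, hwv⟩ => ?_
    have := hG.dist_triangle (u := u) (v := w) (w := v)
    omega
  rw [← hp, this, Set.ncard_empty]

theorem pos_of_dist_eq_succ [Finite V] (hp : HasIntersectionNumbers G p) (hG : G.Connected) {i : ℕ}
    {u v : V} (h : G.dist u v = i + 1) : 0 < p 1 i (i + 1) := by
  rw [← h, ← hp, Set.ncard_pos]
  obtain ⟨w, hw⟩ := hG.exists_walk_length_eq_dist u v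
  cases w with
  | nil => simp at h
  | @cons _ w _ huw wv =>
    rw [← SimpleGraph.dist_eq_one_iff_adj] at huw
    have := SimpleGraph.dist_le wv
    have := hG.dist_triangle (u := u) (v := w) (w := v)
    rw [SimpleGraph.Walk.length_cons] at hw
    exact ⟨w, huw, by omega⟩

variable {R : Type*} [CommSemiring R] [Fintype V]

theorem distMatrix_one_mul_distMatrix (hp : HasIntersectionNumbers G p)
    (hG : G.Connected) (i : ℕ) :
    distMatrix R G 1 * distMatrix R G i =
      ∑ j ∈ Finset.range (i + 2), (p 1 i j : R) • distMatrix R G j := by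
  rw [hp.distMatrix_mul_distMatrix]
  refine radialMatrix_eq_sum fun u v huv => ?_
  rw [hp.eq_zero_of_add_lt_dist hG (by omega), Nat.cast_zero]

theorem trace_distMatrix_mul_mul (hp : HasIntersectionNumbers G p) (i j k : ℕ) :
    (distMatrix R G i * distMatrix R G j * distMatrix R G k).trace =
      distPairCount G k * p i j k := by
  rw [hp.distMatrix_mul_distMatrix, trace_radialMatrix_mul_distMatrix]

theorem distPairCount_mul_comm (hp : HasIntersectionNumbers G p) (i j k : ℕ) :
    distPairCount G k * p i j k = distPairCount G j * p i k j := by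
  have : (distMatrix ℕ G i * distMatrix ℕ G j * distMatrix ℕ G k).trace =
      (distMatrix ℕ G i * distMatrix ℕ G k * distMatrix ℕ G j).trace := by
    rw [← trace_transpose]
    simp only [transpose_mul, distMatrix_transpose]
    rw [← Matrix.mul_assoc, trace_mul_cycle, trace_mul_cycle]
  simpa [hp.trace_distMatrix_mul_mul] using this

theorem distMatrix_mulVec_one (hp : HasIntersectionNumbers G p) (i : ℕ) :
    distMatrix R G i *ᵥ 1 = (p i i 0 : R) • 1 := by
  ext u
  rw [← G.dist_self (v := u), ← hp, Set.ncard_eq_toFinset_card']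
  simp [mulVec, dotProduct, G.dist_comm (v := u)]

theorem card_mul_eq_distPairCount (hp : HasIntersectionNumbers G p) (i : ℕ) :
    Fintype.card V * p i i 0 = distPairCount G i := by
  have := one_dotProduct_distMatrix_mulVec_one (R := ℕ) (G := G) i
  rw [hp.distMatrix_mulVec_one, dotProduct_smul, one_dotProduct_one] at this
  simpa [mul_comm] using this

theorem card_mul_sum_distPairCount_mul (hp : HasIntersectionNumbers G p) (hG : G.Connected)
    (i : ℕ) :
    Fintype.card V * ∑ j ∈ Finset.range (i + 2), distPairCount G j * p 1 i j =
      distPairCount G 1 * distPairCount G i := by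
  have entry_sum : ∑ j ∈ Finset.range (i + 2), distPairCount G j * p 1 i j =
      1 ⬝ᵥ ((distMatrix ℕ G 1 * distMatrix ℕ G i) *ᵥ 1) := by
    simp only [hp.distMatrix_one_mul_distMatrix hG, sum_mulVec, dotProduct_sum, smul_mulVec,
      dotProduct_smul, one_dotProduct_distMatrix_mulVec_one, smul_eq_mul, Nat.cast_id, mul_comm]
  rw [entry_sum, ← mulVec_mulVec, hp.distMatrix_mulVec_one, mulVec_smul,
    hp.distMatrix_mulVec_one, ← hp.card_mul_eq_distPairCount 1, ← hp.card_mul_eq_distPairCount i,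
    dotProduct_smul, dotProduct_smul, one_dotProduct_one]
  simp only [smul_eq_mul, Nat.cast_id]
  ring

theorem distPairCount_succ_eq_zero (hp : HasIntersectionNumbers G p) (hG : G.Connected) {i : ℕ}
    (h : distPairCount G (i + 1) * p 1 i (i + 1) = 0) :
    distPairCount G (i + 1) = 0 := by
  contrapose! h
  obtain ⟨⟨u, v⟩, huv⟩ := Finset.card_ne_zero.mp h
  exact Nat.mul_ne_zero h (hp.pos_of_dist_eq_succ hG (Finset.mem_filter.mp huv).2).ne'

end HasIntersectionNumbers

end Intersection

section CommonPolynomials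

variable {R V W : Type*} [Field R] [CharZero R] [Fintype V] [Fintype W]
  {G : SimpleGraph V} {H : SimpleGraph W} {p q : ℕ → ℕ → ℕ → ℕ} {i j k : ℕ}

/-- The pair of the `i`-th distance matrices of `G` and `H`, on which algebras of simultaneous
polynomials in matrices of `G` and of `H` are tested. -/
noncomputable def distMatrixPair (R : Type*) [Zero R] [One R] (G : SimpleGraph V)
    (H : SimpleGraph W) (i : ℕ) : Matrix V V R × Matrix W W R :=
  (distMatrix R G i, distMatrix R H i)

variable [DecidableEq V] [DecidableEq W] {S : Subalgebra R (Matrix V V R × Matrix W W R)}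

theorem distPairCount_eq_of_mem (hS : ∀ x ∈ S, x.1.trace = x.2.trace)
    (hi : distMatrixPair R G H i ∈ S) : distPairCount G i = distPairCount H i := by
  have := hS _ (S.mul_mem hi hi)
  simpa [distMatrixPair, trace_distMatrix_mul_self] using this

theorem distPairCount_mul_eq_of_mem (hp : HasIntersectionNumbers G p)
    (hq : HasIntersectionNumbers H q) (hS : ∀ x ∈ S, x.1.trace = x.2.trace)
    (hi : distMatrixPair R G H i ∈ S) (hj : distMatrixPair R G H j ∈ S)
    (hk : distMatrixPair R G H k ∈ S) :
    distPairCount G k * p i j k = distPairCount H k * q i j k := by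
  have := hS _ (S.mul_mem (S.mul_mem hi hj) hk)
  simp only [distMatrixPair, Prod.mk_mul_mk, hp.trace_distMatrix_mul_mul,
    hq.trace_distMatrix_mul_mul] at this
  exact_mod_cast this

theorem smul_distMatrix_pair_mem (hp : HasIntersectionNumbers G p)
    (hq : HasIntersectionNumbers H q) (hS : ∀ x ∈ S, x.1.trace = x.2.trace)
    (hi : distMatrixPair R G H i ∈ S) (hj : distMatrixPair R G H j ∈ S)
    (hk : distMatrixPair R G H k ∈ S) :
    ((p i j k : R) • distMatrix R G k, (q i j k : R) • distMatrix R H k) ∈ S := by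
  have hcount := distPairCount_eq_of_mem hS hk
  have hmul := distPairCount_mul_eq_of_mem hp hq hS hi hj hk
  obtain h0 | h0 := eq_or_ne (distPairCount G k) 0
  · rw [distMatrix_eq_zero_of_distPairCount_eq_zero h0,
      distMatrix_eq_zero_of_distPairCount_eq_zero (hcount.symm.trans h0), smul_zero, smul_zero]
    exact S.zero_mem
  · rw [← hcount] at hmul
    rw [← Nat.eq_of_mul_eq_mul_left (Nat.pos_of_ne_zero h0) hmul]
    exact S.smul_mem hk _

theorem smul_distMatrix_succ_pair_mem (hG : G.Connected) (hH : H.Connected)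
    (hp : HasIntersectionNumbers G p) (hq : HasIntersectionNumbers H q)
    (hS : ∀ x ∈ S, x.1.trace = x.2.trace) (h1 : distMatrixPair R G H 1 ∈ S)
    (ih : ∀ j ≤ i, distMatrixPair R G H j ∈ S) :
    ((p 1 i (i + 1) : R) • distMatrix R G (i + 1),
      (q 1 i (i + 1) : R) • distMatrix R H (i + 1)) ∈ S := by
  have hmul := S.mul_mem h1 (ih i le_rfl)
  have hsum := S.sum_mem fun j (hj : j ∈ Finset.range (i + 1)) =>
    smul_distMatrix_pair_mem hp hq hS h1 (ih i le_rfl)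
      (ih j (Nat.lt_succ_iff.mp (Finset.mem_range.mp hj)))
  convert S.sub_mem hmul hsum using 1
  rw [distMatrixPair, distMatrixPair, Prod.mk_mul_mk, hp.distMatrix_one_mul_distMatrix hG,
    hq.distMatrix_one_mul_distMatrix hH]
  ext1 <;> simp [Finset.sum_range_succ _ (i + 1), Prod.fst_sum, Prod.snd_sum]

theorem distPairCount_mul_succ_eq (hG : G.Connected) (hH : H.Connected)
    (hp : HasIntersectionNumbers G p) (hq : HasIntersectionNumbers H q)
    (hS : ∀ x ∈ S, x.1.trace = x.2.trace) (h1 : distMatrixPair R G H 1 ∈ S)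
    (ih : ∀ j ≤ i, distMatrixPair R G H j ∈ S) :
    distPairCount G (i + 1) * p 1 i (i + 1) = distPairCount H (i + 1) * q 1 i (i + 1) := by
  have hcard : Fintype.card V = Fintype.card W := by
    simpa [trace_one] using hS 1 S.one_mem
  have : Nonempty W := hH.nonempty
  have hsum : ∑ j ∈ Finset.range (i + 2), distPairCount G j * p 1 i j =
      ∑ j ∈ Finset.range (i + 2), distPairCount H j * q 1 i j := by
    refine Nat.eq_of_mul_eq_mul_left (Fintype.card_pos (α := W)) ?_
    rw [hq.card_mul_sum_distPairCount_mul hH, ← distPairCount_eq_of_mem hS h1,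
      ← distPairCount_eq_of_mem hS (ih i le_rfl), ← hp.card_mul_sum_distPairCount_mul hG, hcard]
  have hinit : ∑ j ∈ Finset.range (i + 1), distPairCount G j * p 1 i j =
      ∑ j ∈ Finset.range (i + 1), distPairCount H j * q 1 i j :=
    Finset.sum_congr rfl fun j hj => distPairCount_mul_eq_of_mem hp hq hS h1 (ih i le_rfl)
      (ih j (Nat.lt_succ_iff.mp (Finset.mem_range.mp hj)))
  rw [Finset.sum_range_succ _ (i + 1), Finset.sum_range_succ _ (i + 1), hinit] at hsum
  exact Nat.add_left_cancel hsum

theorem distMatrixPair_succ_mem (hG : G.Connected) (hH : H.Connected)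
    (hp : HasIntersectionNumbers G p) (hq : HasIntersectionNumbers H q)
    (hS : ∀ x ∈ S, x.1.trace = x.2.trace) (h1 : distMatrixPair R G H 1 ∈ S)
    (ih : ∀ j ≤ i, distMatrixPair R G H j ∈ S) : distMatrixPair R G H (i + 1) ∈ S := by
  have hmem := smul_distMatrix_succ_pair_mem hG hH hp hq hS h1 ih
  have hmul := distPairCount_mul_succ_eq hG hH hp hq hS h1 ih
  obtain h0 | h0 := eq_or_ne (distPairCount G (i + 1) * p 1 i (i + 1)) 0
  · have hG0 := hp.distPairCount_succ_eq_zero hG h0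
    have hH0 := hq.distPairCount_succ_eq_zero hH (hmul.symm.trans h0)
    rw [distMatrixPair, distMatrix_eq_zero_of_distPairCount_eq_zero hG0,
      distMatrix_eq_zero_of_distPairCount_eq_zero hH0]
    exact S.zero_mem
  · have hsq := hS _ (S.mul_mem hmem hmem)
    simp only [Prod.mk_mul_mk, Matrix.smul_mul, Matrix.mul_smul, trace_smul,
      trace_distMatrix_mul_self, smul_eq_mul] at hsq
    norm_cast at hsq
    -- `hmul` and `hsq` read `T p = T' q` and `T p² = T' q²`, so `(T p) p = (T p) q`.
    have hpq : p 1 i (i + 1) = q 1 i (i + 1) := by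
      refine Nat.eq_of_mul_eq_mul_left (Nat.pos_of_ne_zero h0) ?_
      linear_combination hsq + q 1 i (i + 1) * hmul.symm
    rw [← hpq] at hmem
    convert S.smul_mem hmem (p 1 i (i + 1) : R)⁻¹ using 1
    have : (p 1 i (i + 1) : R) ≠ 0 := Nat.cast_ne_zero.mpr (right_ne_zero_of_mul h0)
    rw [Prod.smul_mk, inv_smul_smul₀ this, inv_smul_smul₀ this, distMatrixPair]

theorem distMatrixPair_mem (hG : G.Connected) (hH : H.Connected)
    (hp : HasIntersectionNumbers G p) (hq : HasIntersectionNumbers H q)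
    (hS : ∀ x ∈ S, x.1.trace = x.2.trace) (h1 : distMatrixPair R G H 1 ∈ S) :
    distMatrixPair R G H i ∈ S := by
  induction i using Nat.strong_induction_on with
  | _ i ih =>
    cases i with
    | zero =>
      rw [distMatrixPair, distMatrix_zero hG, distMatrix_zero hH]
      exact S.one_mem
    | succ i =>
      exact distMatrixPair_succ_mem hG hH hp hq hS h1 fun j hj => ih j (Nat.lt_succ_of_le hj)

end CommonPolynomials

section Cospectral

variable {V W : Type*} [Fintype V] [Fintype W] {G : SimpleGraph V} {H : SimpleGraph W}
  {p q : ℕ → ℕ → ℕ → ℕ}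

variable [DecidableEq V] [DecidableEq W] [DecidableRel G.Adj] [DecidableRel H.Adj]

/-- The subalgebra of all pairs `(r(A), r(B))`, where `A` and `B` are the adjacency matrices of `G`
and `H` and `r` is a polynomial. -/
noncomputable def adjPolynomialPairs (G : SimpleGraph V) (H : SimpleGraph W) [DecidableRel G.Adj]
    [DecidableRel H.Adj] : Subalgebra ℝ (Matrix V V ℝ × Matrix W W ℝ) :=
  ((aeval (R := ℝ) (G.adjMatrix ℝ)).prod (aeval (H.adjMatrix ℝ))).range

theorem trace_fst_eq_trace_snd_of_mem_adjPolynomialPairs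
    (hGH : (G.adjMatrix ℝ).charpoly = (H.adjMatrix ℝ).charpoly) :
    ∀ x ∈ adjPolynomialPairs G H, x.1.trace = x.2.trace := by
  rintro _ ⟨r, rfl⟩
  exact (charpoly_eq_iff_forall_trace_aeval_eq (G.isHermitian_adjMatrix ℝ)
    (H.isHermitian_adjMatrix ℝ)).mp hGH r

theorem distMatrixPair_mem_adjPolynomialPairs (hG : G.Connected) (hH : H.Connected)
    (hp : HasIntersectionNumbers G p) (hq : HasIntersectionNumbers H q)
    (hGH : (G.adjMatrix ℝ).charpoly = (H.adjMatrix ℝ).charpoly) (i : ℕ) :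
    distMatrixPair ℝ G H i ∈ adjPolynomialPairs G H :=
  distMatrixPair_mem hG hH hp hq (trace_fst_eq_trace_snd_of_mem_adjPolynomialPairs hGH)
    ⟨Polynomial.X, by simp [distMatrixPair, distMatrix_one]⟩

theorem distPairCount_eq_of_charpoly_eq (hG : G.Connected) (hH : H.Connected)
    (hp : HasIntersectionNumbers G p) (hq : HasIntersectionNumbers H q)
    (hGH : (G.adjMatrix ℝ).charpoly = (H.adjMatrix ℝ).charpoly) (i : ℕ) :
    distPairCount G i = distPairCount H i :=
  distPairCount_eq_of_mem (trace_fst_eq_trace_snd_of_mem_adjPolynomialPairs hGH)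
    (distMatrixPair_mem_adjPolynomialPairs hG hH hp hq hGH i)

theorem HasIntersectionNumbers.exists_aeval_adjMatrix_eq_distMatrix
    (hp : HasIntersectionNumbers G p) (hG : G.Connected) (i : ℕ) :
    ∃ r : ℝ[X], aeval (G.adjMatrix ℝ) r = distMatrix ℝ G i := by
  obtain ⟨r, hr⟩ := distMatrixPair_mem_adjPolynomialPairs hG hG hp hp rfl i
  exact ⟨r, congrArg Prod.fst hr⟩

theorem HasIntersectionNumbers.of_charpoly_eq (hp : HasIntersectionNumbers G p)
    (hG : G.Connected) (hH : H.Connected) (hq : HasIntersectionNumbers H q)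
    (hGH : (G.adjMatrix ℝ).charpoly = (H.adjMatrix ℝ).charpoly) : HasIntersectionNumbers H p := by
  intro i j u v
  have hmem := distMatrixPair_mem_adjPolynomialPairs hG hH hp hq hGH
  have hmul := distPairCount_mul_eq_of_mem hp hq
    (trace_fst_eq_trace_snd_of_mem_adjPolynomialPairs hGH) (hmem i) (hmem j) (hmem (H.dist u v))
  rw [distPairCount_eq_of_charpoly_eq hG hH hp hq hGH] at hmul
  rw [hq, Nat.eq_of_mul_eq_mul_left (distPairCount_pos u v) hmul]

end Cospectral

section DistIsoMatrix

variable {V W : Type*} [Fintype V] {G : SimpleGraph V} {H : SimpleGraph W}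

/-- The matrix whose entry at `((g, h), (g', h'))` is `0` if the distance of `g` and `g'` in `G`
differs from that of `h` and `h'` in `H`, and is otherwise the inverse of the number of pairs of
vertices of `G` at that distance. It is the isomorphism matrix attached to two graphs with the same
intersection numbers and the same numbers of pairs of vertices at each distance. -/
noncomputable def distIsoMatrix (G : SimpleGraph V) (H : SimpleGraph W) :
    Matrix (V × W) (V × W) ℝ :=
  of fun x y => if G.dist x.1 y.1 = H.dist x.2 y.2
    then (distPairCount G (G.dist x.1 y.1) : ℝ)⁻¹ else 0

theorem distIsoMatrix_apply (g g' : V) (h h' : W) :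
    distIsoMatrix G H (g, h) (g', h') = if G.dist g g' = H.dist h h'
      then (distPairCount G (G.dist g g') : ℝ)⁻¹ else 0 := rfl

theorem distIsoMatrix_nonneg (x y : V × W) : 0 ≤ distIsoMatrix G H x y := by
  simp only [distIsoMatrix, of_apply]
  positivity

theorem distIsoMatrix_isHermitian : (distIsoMatrix G H).IsHermitian := by
  ext ⟨g, h⟩ ⟨g', h'⟩
  simp [distIsoMatrix_apply, G.dist_comm (v := g), H.dist_comm (v := h)]

theorem distIsoMatrix_eq_sum (hG : G.Connected) :
    distIsoMatrix G H = ∑ k ∈ Finset.range (Fintype.card V),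
      (distPairCount G k : ℝ)⁻¹ • (distMatrix ℝ G k ⊗ₖ distMatrix ℝ H k) := by
  ext ⟨g, h⟩ ⟨g', h'⟩
  have hlt := dist_lt_card hG g g'
  obtain hd | hd := eq_or_ne (G.dist g g') (H.dist h h')
  · simp [distIsoMatrix_apply, Matrix.sum_apply, ← hd, hlt]
  · simp [distIsoMatrix_apply, Matrix.sum_apply, hd]

theorem distIsoMatrix_apply_eq_fst (g g' : V) (h h' : W) :
    distIsoMatrix G H (g, h) (g', h') =
      distMatrix ℝ G (H.dist h h') g g' * (distPairCount G (H.dist h h') : ℝ)⁻¹ := by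
  rw [distIsoMatrix_apply, distMatrix_apply, ite_mul, one_mul, zero_mul]
  split_ifs with hd <;> simp only [hd]

theorem distIsoMatrix_apply_eq_snd (g g' : V) (h h' : W) :
    distIsoMatrix G H (g, h) (g', h') =
      distMatrix ℝ H (G.dist g g') h h' * (distPairCount G (G.dist g g') : ℝ)⁻¹ := by
  simp only [distIsoMatrix_apply, distMatrix_apply, ite_mul, one_mul, zero_mul,
    eq_comm (a := G.dist g g')]

theorem posDef_sum_distMatrix_mul_self_kronecker_one [Finite W] [DecidableEq W]
    (hG : G.Connected) :
    (∑ k ∈ Finset.range (Fintype.card V), (distPairCount G k : ℝ)⁻¹ •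
      ((distMatrix ℝ G k * distMatrix ℝ G k) ⊗ₖ (1 : Matrix W W ℝ))).PosDef := by
  classical
  obtain ⟨v⟩ := hG.nonempty
  obtain ⟨N, hN⟩ := Nat.exists_eq_succ_of_ne_zero (Fintype.card_pos_iff.mpr ⟨v⟩).ne'
  have hcount : 0 < distPairCount G 0 := by simpa using distPairCount_pos (G := G) v v
  rw [hN, Finset.sum_range_succ', add_comm, distMatrix_zero hG, one_mul, one_kronecker_one]
  refine (PosDef.one.smul (by positivity)).add_posSemidef
    (posSemidef_sum _ fun k _ => (PosSemidef.kronecker ?_ .one).smul (by positivity))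
  simpa [distMatrix_transpose] using posSemidef_conjTranspose_mul_self (distMatrix ℝ G (k + 1))

variable [Fintype W]

theorem isIsoMatrix_distIsoMatrix (hG : G.Connected) (hH : H.Connected)
    (hcount : ∀ i, distPairCount G i = distPairCount H i) :
    IsIsoMatrix G H (distIsoMatrix G H) := by
  refine ⟨fun g g' => ?_, fun h h' => ?_, fun g g' h h' hrel => ?_⟩
  · simp only [distIsoMatrix_apply_eq_snd, distMatrix_apply, ite_mul, one_mul, zero_mul]
    rw [sum_sum_dist_eq_ite, ← hcount]
    exact mul_inv_cancel₀ (Nat.cast_ne_zero.mpr (distPairCount_pos g g').ne')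
  · simp only [distIsoMatrix_apply_eq_fst, distMatrix_apply, ite_mul, one_mul, zero_mul]
    rw [sum_sum_dist_eq_ite, hcount]
    exact mul_inv_cancel₀ (Nat.cast_ne_zero.mpr (distPairCount_pos h h').ne')
  · rw [distIsoMatrix_apply, if_neg]
    contrapose! hrel
    exact ⟨by rw [← hG.dist_eq_zero_iff, hrel, hH.dist_eq_zero_iff],
      by rw [← SimpleGraph.dist_eq_one_iff_adj, hrel, SimpleGraph.dist_eq_one_iff_adj]⟩

variable {p : ℕ → ℕ → ℕ → ℕ}

theorem distMatrix_kronecker_one_mul_distIsoMatrix [DecidableEq V] [DecidableEq W]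
    (hcount : ∀ i, distPairCount G i = distPairCount H i)
    (hp : HasIntersectionNumbers G p) (hq : HasIntersectionNumbers H p) (i : ℕ) :
    (distMatrix ℝ G i ⊗ₖ (1 : Matrix W W ℝ)) * distIsoMatrix G H =
      ((1 : Matrix V V ℝ) ⊗ₖ distMatrix ℝ H i) * distIsoMatrix G H := by
  ext ⟨g, h⟩ ⟨g', h'⟩
  have hd : (distPairCount G (G.dist g g') : ℝ) ≠ 0 :=
    Nat.cast_ne_zero.mpr (distPairCount_pos g g').ne'
  have hd' : (distPairCount G (H.dist h h') : ℝ) ≠ 0 :=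
    Nat.cast_ne_zero.mpr (hcount _ ▸ (distPairCount_pos h h').ne')
  calc _ = p i (H.dist h h') (G.dist g g') * (distPairCount G (H.dist h h') : ℝ)⁻¹ := by
        simp only [kronecker_one_mul_apply, distIsoMatrix_apply_eq_fst, ← mul_assoc,
          ← Finset.sum_mul]
        rw [← mul_apply, hp.distMatrix_mul_distMatrix, radialMatrix_apply]
    _ = p i (G.dist g g') (H.dist h h') * (distPairCount G (G.dist g g') : ℝ)⁻¹ := by
        field_simp
        exact_mod_cast (mul_comm _ _).trans (hp.distPairCount_mul_comm _ _ _)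
    _ = _ := by
        simp only [one_kronecker_mul_apply, distIsoMatrix_apply_eq_snd, ← mul_assoc,
          ← Finset.sum_mul]
        rw [← mul_apply, hq.distMatrix_mul_distMatrix, radialMatrix_apply]

theorem posSemidef_distIsoMatrix (hG : G.Connected)
    (hcount : ∀ i, distPairCount G i = distPairCount H i)
    (hp : HasIntersectionNumbers G p) (hq : HasIntersectionNumbers H p) :
    (distIsoMatrix G H).PosSemidef := by
  classical
  refine posSemidef_of_mul_self_eq_mul distIsoMatrix_isHermitian
    (posDef_sum_distMatrix_mul_self_kronecker_one hG) ?_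
  have term (k : ℕ) : (distMatrix ℝ G k ⊗ₖ distMatrix ℝ H k) * distIsoMatrix G H =
      ((distMatrix ℝ G k * distMatrix ℝ G k) ⊗ₖ 1) * distIsoMatrix G H := calc
    _ = (distMatrix ℝ G k ⊗ₖ 1) * ((1 ⊗ₖ distMatrix ℝ H k) * distIsoMatrix G H) := by
      rw [← Matrix.mul_assoc, ← mul_kronecker_mul, Matrix.mul_one, Matrix.one_mul]
    _ = _ := by
      rw [← distMatrix_kronecker_one_mul_distIsoMatrix hcount hp hq, ← Matrix.mul_assoc,
        ← mul_kronecker_mul, Matrix.mul_one]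
  nth_rw 1 [distIsoMatrix_eq_sum hG]
  simp only [Finset.sum_mul, Matrix.smul_mul, term]

end DistIsoMatrix

namespace IsIsoMatrix

variable {V W : Type*} [Fintype V] [Fintype W] {G : SimpleGraph V} {H : SimpleGraph W}
  {M : Matrix (V × W) (V × W) ℝ}

theorem swap (hM : IsIsoMatrix G H M) : IsIsoMatrix H G (M.submatrix Prod.swap Prod.swap) :=
  ⟨hM.2.1, hM.1, fun h h' g g' hrel =>
    hM.2.2 g g' h h' fun ⟨heq, hadj⟩ => hrel ⟨heq.symm, hadj.symm⟩⟩

theorem relEq_of_ne_zero (hM : IsIsoMatrix G H M) {g g' : V} {h h' : W}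
    (hne : M (g, h) (g', h') ≠ 0) : relEq G H g g' h h' :=
  by_contra fun hrel => hne (hM.2.2 g g' h h' hrel)

theorem exists_ne_zero (hM : IsIsoMatrix G H M) (h h' : W) :
    ∃ g g', M (g, h) (g', h') ≠ 0 := by
  by_contra! hzero
  simpa [hzero] using hM.2.1 h h'

theorem choiMap_eq_of_forall (hM : IsIsoMatrix G H M) {X : Matrix V V ℝ} {Y : Matrix W W ℝ}
    (hXY : ∀ g g' h h', M (g, h) (g', h') ≠ 0 → X g g' = Y h h') : choiMap M X = Y := by
  ext h h'
  calc choiMap M X h h' = ∑ g, ∑ g', M (g, h) (g', h') * Y h h' := by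
        rw [choiMap_apply]
        refine Finset.sum_congr rfl fun g _ => Finset.sum_congr rfl fun g' _ => ?_
        obtain hzero | hne := eq_or_ne (M (g, h) (g', h')) 0
        · rw [hzero, zero_mul, zero_mul]
        · rw [hXY g g' h h' hne]
    _ = Y h h' := by simp only [← Finset.sum_mul, hM.2.1, one_mul]

theorem choiMap_one [DecidableEq V] [DecidableEq W] (hM : IsIsoMatrix G H M) : choiMap M 1 = 1 :=
  hM.choiMap_eq_of_forall fun _ _ _ _ hne => by
    simp only [one_apply, (hM.relEq_of_ne_zero hne).1]

theorem trace_choiMap (hM : IsIsoMatrix G H M) (X : Matrix V V ℝ) :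
    (choiMap M X).trace = X.trace := by
  classical
  rw [← mul_one (choiMap M X), trace_choiMap_mul, transpose_one, hM.swap.choiMap_one, one_mul,
    trace_transpose]

section Adjacency

variable [DecidableRel G.Adj] [DecidableRel H.Adj]

theorem choiMap_adjMatrix (hM : IsIsoMatrix G H M) :
    choiMap M (G.adjMatrix ℝ) = H.adjMatrix ℝ :=
  hM.choiMap_eq_of_forall fun _ _ _ _ hne => by
    simp only [SimpleGraph.adjMatrix_apply, (hM.relEq_of_ne_zero hne).2]

theorem trace_adjMatrix_mul_self (hM : IsIsoMatrix G H M) :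
    (G.adjMatrix ℝ * G.adjMatrix ℝ).trace = (H.adjMatrix ℝ * H.adjMatrix ℝ).trace := by
  nth_rw 1 [← hM.choiMap_adjMatrix]
  rw [trace_choiMap_mul, SimpleGraph.transpose_adjMatrix, SimpleGraph.transpose_adjMatrix,
    hM.swap.choiMap_adjMatrix]

theorem adjMatrix_kronecker_one_mul [DecidableEq V] [DecidableEq W] (hM : IsIsoMatrix G H M)
    (hpsd : M.PosSemidef) :
    (G.adjMatrix ℝ ⊗ₖ 1) * M = (1 ⊗ₖ H.adjMatrix ℝ) * M := by
  rw [← sub_eq_zero, ← Matrix.sub_mul]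
  refine mul_eq_zero_of_trace_mul_conjTranspose_mul_self_eq_zero hpsd ?_
  have expand : (G.adjMatrix ℝ ⊗ₖ (1 : Matrix W W ℝ) - (1 : Matrix V V ℝ) ⊗ₖ H.adjMatrix ℝ)ᴴ *
      (G.adjMatrix ℝ ⊗ₖ (1 : Matrix W W ℝ) - (1 : Matrix V V ℝ) ⊗ₖ H.adjMatrix ℝ) =
      (G.adjMatrix ℝ * G.adjMatrix ℝ) ⊗ₖ 1 - 2 • (G.adjMatrix ℝ ⊗ₖ H.adjMatrix ℝ) +
        1 ⊗ₖ (H.adjMatrix ℝ * H.adjMatrix ℝ) := by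
    simp only [conjTranspose_sub, conjTranspose_kronecker, conjTranspose_one,
      (G.isHermitian_adjMatrix ℝ).eq, (H.isHermitian_adjMatrix ℝ).eq, sub_mul, mul_sub,
      ← mul_kronecker_mul, mul_one, one_mul]
    abel
  rw [expand, Matrix.mul_add, Matrix.mul_sub, Matrix.mul_smul, trace_add, trace_sub, trace_smul]
  simp only [trace_mul_kronecker, transpose_one, transpose_mul, SimpleGraph.transpose_adjMatrix,
    hM.choiMap_one, hM.choiMap_adjMatrix, hM.trace_choiMap, hM.trace_adjMatrix_mul_self,
    one_mul, mul_one]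
  ring

theorem choiMap_adjMatrix_mul (hM : IsIsoMatrix G H M) (hpsd : M.PosSemidef) (X : Matrix V V ℝ) :
    choiMap M (G.adjMatrix ℝ * X) = H.adjMatrix ℝ * choiMap M X := by
  classical
  rw [← choiMap_one_kronecker_mul, ← hM.adjMatrix_kronecker_one_mul hpsd,
    choiMap_kronecker_one_mul, SimpleGraph.transpose_adjMatrix]

variable [DecidableEq V] [DecidableEq W]

theorem choiMap_aeval_adjMatrix_mul (hM : IsIsoMatrix G H M) (hpsd : M.PosSemidef) (r : ℝ[X])
    (X : Matrix V V ℝ) :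
    choiMap M (aeval (G.adjMatrix ℝ) r * X) = aeval (H.adjMatrix ℝ) r * choiMap M X := by
  induction r using Polynomial.induction_on generalizing X with
  | C a => simp [Algebra.algebraMap_eq_smul_one]
  | add r s hr hs => simp only [map_add, add_mul, hr, hs]
  | monomial n a ih =>
    rw [pow_succ, ← mul_assoc, map_mul (aeval (G.adjMatrix ℝ)), map_mul (aeval (H.adjMatrix ℝ)),
      Polynomial.aeval_X, Polynomial.aeval_X, mul_assoc, ih, hM.choiMap_adjMatrix_mul hpsd,
      mul_assoc]

theorem choiMap_aeval_adjMatrix (hM : IsIsoMatrix G H M) (hpsd : M.PosSemidef) (r : ℝ[X]) :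
    choiMap M (aeval (G.adjMatrix ℝ) r) = aeval (H.adjMatrix ℝ) r := by
  simpa [hM.choiMap_one] using hM.choiMap_aeval_adjMatrix_mul hpsd r 1

theorem charpoly_eq (hM : IsIsoMatrix G H M) (hpsd : M.PosSemidef) :
    (G.adjMatrix ℝ).charpoly = (H.adjMatrix ℝ).charpoly :=
  (charpoly_eq_iff_forall_trace_aeval_eq (G.isHermitian_adjMatrix ℝ)
    (H.isHermitian_adjMatrix ℝ)).mpr fun r => by
      rw [← hM.choiMap_aeval_adjMatrix hpsd, hM.trace_choiMap]

end Adjacency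

theorem exists_walk_length_eq (hM : IsIsoMatrix G H M) (hpsd : M.PosSemidef)
    (hnonneg : ∀ x y, 0 ≤ M x y) {g g' : V} {h h' : W} (hne : M (g, h) (g', h') ≠ 0)
    (walk : G.Walk g g') : ∃ walk' : H.Walk h h', walk'.length = walk.length := by
  classical
  have choiMap_pow : choiMap M (G.adjMatrix ℝ ^ walk.length) = H.adjMatrix ℝ ^ walk.length := by
    simpa using hM.choiMap_aeval_adjMatrix hpsd (Polynomial.X ^ walk.length)
  have pow_nonneg (x x' : V) : 0 ≤ (G.adjMatrix ℝ ^ walk.length) x x' := by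
    rw [SimpleGraph.adjMatrix_pow_apply_eq_card_walk]
    exact Nat.cast_nonneg _
  have pow_pos : 0 < (G.adjMatrix ℝ ^ walk.length) g g' := by
    rw [SimpleGraph.adjMatrix_pow_apply_eq_card_walk]
    exact Nat.cast_pos.mpr (Fintype.card_pos_iff.mpr ⟨walk, rfl⟩)
  have pow_pos' : 0 < (H.adjMatrix ℝ ^ walk.length) h h' := calc
    0 < M (g, h) (g', h') * (G.adjMatrix ℝ ^ walk.length) g g' :=
      mul_pos ((hnonneg _ _).lt_of_ne' hne) pow_pos
    _ ≤ (H.adjMatrix ℝ ^ walk.length) h h' :=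
      choiMap_pow ▸ mul_le_choiMap_apply hnonneg pow_nonneg g g' h h'
  rw [SimpleGraph.adjMatrix_pow_apply_eq_card_walk, Nat.cast_pos, Fintype.card_pos_iff] at pow_pos'
  exact nonempty_subtype.mp pow_pos'

theorem connected (hM : IsIsoMatrix G H M) (hpsd : M.PosSemidef)
    (hnonneg : ∀ x y, 0 ≤ M x y) (hG : G.Connected) : H.Connected where
  preconnected h h' := by
    obtain ⟨g, g', hne⟩ := hM.exists_ne_zero h h'
    obtain ⟨walk⟩ := hG.preconnected g g'
    exact ⟨(hM.exists_walk_length_eq hpsd hnonneg hne walk).choose⟩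
  nonempty := by
    obtain ⟨g⟩ := hG.nonempty
    obtain ⟨h, -⟩ := hM.swap.exists_ne_zero g g
    exact ⟨h⟩

theorem dist_le_of_ne_zero (hM : IsIsoMatrix G H M) (hpsd : M.PosSemidef)
    (hnonneg : ∀ x y, 0 ≤ M x y) (hG : G.Connected) {g g' : V} {h h' : W}
    (hne : M (g, h) (g', h') ≠ 0) : H.dist h h' ≤ G.dist g g' := by
  obtain ⟨walk, hwalk⟩ := hG.exists_walk_length_eq_dist g g'
  obtain ⟨walk', hwalk'⟩ := hM.exists_walk_length_eq hpsd hnonneg hne walk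
  exact (SimpleGraph.dist_le walk').trans_eq (hwalk'.trans hwalk)

theorem dist_eq_of_ne_zero (hM : IsIsoMatrix G H M) (hpsd : M.PosSemidef)
    (hnonneg : ∀ x y, 0 ≤ M x y) (hG : G.Connected) {g g' : V} {h h' : W}
    (hne : M (g, h) (g', h') ≠ 0) : G.dist g g' = H.dist h h' :=
  le_antisymm
    (hM.swap.dist_le_of_ne_zero (hpsd.submatrix _) (fun _ _ => hnonneg _ _)
      (hM.connected hpsd hnonneg hG) hne)
    (hM.dist_le_of_ne_zero hpsd hnonneg hG hne)

theorem choiMap_radialMatrix (hM : IsIsoMatrix G H M) (hpsd : M.PosSemidef)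
    (hnonneg : ∀ x y, 0 ≤ M x y) (hG : G.Connected) (f : ℕ → ℝ) :
    choiMap M (radialMatrix G f) = radialMatrix H f :=
  hM.choiMap_eq_of_forall fun _ _ _ _ hne => by
    rw [radialMatrix_apply, radialMatrix_apply, hM.dist_eq_of_ne_zero hpsd hnonneg hG hne]

theorem hasIntersectionNumbers (hM : IsIsoMatrix G H M) (hpsd : M.PosSemidef)
    (hnonneg : ∀ x y, 0 ≤ M x y) (hG : G.Connected) {p : ℕ → ℕ → ℕ → ℕ}
    (hp : HasIntersectionNumbers G p) : HasIntersectionNumbers H p := by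
  classical
  refine hasIntersectionNumbers_of_distMatrix_mul_distMatrix (R := ℝ) fun i j => ?_
  have choiMap_distMatrix (k : ℕ) : choiMap M (distMatrix ℝ G k) = distMatrix ℝ H k :=
    hM.choiMap_radialMatrix hpsd hnonneg hG _
  obtain ⟨r, hr⟩ := hp.exists_aeval_adjMatrix_eq_distMatrix hG i
  calc distMatrix ℝ H i * distMatrix ℝ H j
      = aeval (H.adjMatrix ℝ) r * choiMap M (distMatrix ℝ G j) := by
        rw [← choiMap_distMatrix i, ← hr, hM.choiMap_aeval_adjMatrix hpsd, choiMap_distMatrix]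
    _ = choiMap M (distMatrix ℝ G i * distMatrix ℝ G j) := by
        rw [← hM.choiMap_aeval_adjMatrix_mul hpsd, hr]
    _ = radialMatrix H fun k => (p i j k : ℝ) := by
        rw [hp.distMatrix_mul_distMatrix, hM.choiMap_radialMatrix hpsd hnonneg hG]

end IsIsoMatrix

/-- For a distance regular graph `G`, a graph `H` is `DNN`-isomorphic to `G` iff `H`
is distance regular and cospectral to `G`. -/
theorem dnn_iso_iff_of_distanceRegular {α β : Type*}
    [Fintype α] [Fintype β] [DecidableEq α] [DecidableEq β]
    (G : SimpleGraph α) (H : SimpleGraph β)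
    [DecidableRel G.Adj] [DecidableRel H.Adj]
    (hG : DistanceRegular G) :
    (∃ M, IsIsoMatrix G H M ∧ M.PosSemidef ∧ ∀ p q, 0 ≤ M p q) ↔
      (DistanceRegular H ∧
        (G.adjMatrix ℝ).charpoly = (H.adjMatrix ℝ).charpoly) := by
  obtain ⟨hconn, p, hp : HasIntersectionNumbers G p⟩ := hG
  constructor
  · rintro ⟨M, hM, hpsd, hnonneg⟩
    exact ⟨⟨hM.connected hpsd hnonneg hconn, p, hM.hasIntersectionNumbers hpsd hnonneg hconn hp⟩,
      hM.charpoly_eq hpsd⟩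
  · rintro ⟨⟨hconn', q, hq : HasIntersectionNumbers H q⟩, hGH⟩
    have hcount := distPairCount_eq_of_charpoly_eq hconn hconn' hp hq hGH
    have hp' : HasIntersectionNumbers H p := hp.of_charpoly_eq hconn hconn' hq hGH
    exact ⟨distIsoMatrix G H, isIsoMatrix_distIsoMatrix hconn hconn' hcount,
      posSemidef_distIsoMatrix hconn hcount hp hp', distIsoMatrix_nonneg⟩
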